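/- Let (X_1,…,X_r) have the Gumbel-case GEV_r density (ξ = 0) with parameters μ ∈ ℝ, σ > 0, and r ≥ 2, and set Y = −log σ − e^{−Z_r} + e^{−Z_{r−1}} − Z_r with Z_j = (X_j − μ)/σ. Then E[Y] = −log σ − 1 + ψ(r). -/

import Mathlib

open MeasureTheory ProbabilityTheory Real Filter Topology

/-- The joint density of the `r` largest order statistics limit in the Gumbel
case (ξ = 0) with location `μ` and scale `σ`.  The coordinates are in
decreasing order: `x 0` is `x_1` (the largest) and `x ⟨r-1,_⟩` is `x_r`. -/
noncomputable def gevr0Density (μ σ : ℝ) (r : ℕ) (x : Fin r → ℝ) : ℝ :=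
  if h : 0 < r ∧ StrictAnti x then
    (σ ^ r)⁻¹ * Real.exp
      (-Real.exp (-((x ⟨r - 1, Nat.sub_lt h.1 Nat.one_pos⟩ - μ) / σ))
        - ∑ j, (x j - μ) / σ)
  else 0

/-- The Gumbel-case GEV_r probability measure on `ℝ^r`. -/
noncomputable def gevr0Measure (μ σ : ℝ) (r : ℕ) : Measure (Fin r → ℝ) :=
  MeasureTheory.volume.withDensity fun x => ENNReal.ofReal (gevr0Density μ σ r x)

/-- The digamma function `ψ(x) = Γ'(x)/Γ(x)`. -/
noncomputable def digamma (x : ℝ) : ℝ := deriv Real.Gamma x / Real.Gamma x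

/-!
The numbers `t_j = e^{-z_j}` are the first `r` arrival times of a Poisson process of unit rate: in
these coordinates the density becomes `e^{-t_r}` on `0 < t_1 < ⋯ < t_r`. Hence the last gap
`t_r - t_{r-1}` is exponential with mean `1`, and `t_r`, a sum of `r` independent exponential gaps,
is Gamma distributed with shape `r`. The claim follows by taking expectations in
`Y = -log σ - (t_r - t_{r-1}) + log t_r`, since `E[log t_r]` is the derivative at `s = 0` of
`E[t_r ^ s] = Γ(r + s) / Γ(r)`.
-/

section GammaDistribution

variable {a b r s : ℝ}

lemma gammaMeasure_eq_withDensity_restrict_Ioi (a r : ℝ) :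
    gammaMeasure a r = (volume.restrict (Set.Ioi 0)).withDensity fun x =>
      ENNReal.ofReal (r ^ a / Gamma a * x ^ (a - 1) * rexp (-(r * x))) := by
  rw [gammaMeasure, restrict_Ioi_eq_restrict_Ici,
    ← withDensity_indicator measurableSet_Ici]
  congr 1 with x
  by_cases hx : 0 ≤ x
  · rw [gammaPDF_of_nonneg hx, Set.indicator_of_mem (Set.mem_Ici.2 hx)]
  · rw [gammaPDF_of_neg (not_le.1 hx), Set.indicator_of_notMem (by simpa using hx)]

lemma lintegral_expMeasure_one (f : ℝ → ENNReal) :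
    ∫⁻ t, f t ∂expMeasure 1 = ∫⁻ t in Set.Ioi 0, ENNReal.ofReal (rexp (-t)) * f t := by
  rw [expMeasure, gammaMeasure_eq_withDensity_restrict_Ioi,
    lintegral_withDensity_eq_lintegral_mul_non_measurable _ (by fun_prop)
      (ae_of_all _ fun _ => ENNReal.ofReal_lt_top)]
  simp

lemma ae_pos_gammaMeasure (a r : ℝ) : ∀ᵐ x ∂gammaMeasure a r, 0 < x := by
  rw [gammaMeasure_eq_withDensity_restrict_Ioi]
  exact (withDensity_absolutelyContinuous _ _).ae_le (ae_restrict_mem measurableSet_Ioi)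

lemma integral_gammaMeasure {E : Type*} [NormedAddCommGroup E] [NormedSpace ℝ E]
    (ha : 0 < a) (hr : 0 < r) (f : ℝ → E) :
    ∫ x, f x ∂gammaMeasure a r =
      ∫ x in Set.Ioi 0, (r ^ a / Gamma a * x ^ (a - 1) * rexp (-(r * x))) • f x := by
  rw [gammaMeasure_eq_withDensity_restrict_Ioi,
    integral_withDensity_eq_integral_toReal_smul (by fun_prop)
      (ae_of_all _ fun _ => ENNReal.ofReal_lt_top)]
  refine setIntegral_congr_fun measurableSet_Ioi fun x (hx : 0 < x) => ?_
  have := Gamma_pos_of_pos ha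
  rw [ENNReal.toReal_ofReal (by positivity)]

lemma mgf_id_gammaMeasure (ha : 0 < a) (hr : 0 < r) (hs : s < r) :
    mgf id (gammaMeasure a r) s = (r / (r - s)) ^ a := by
  have hrs : 0 < r - s := sub_pos.2 hs
  calc ∫ x, rexp (s * x) ∂gammaMeasure a r
      = ∫ x in Set.Ioi 0, r ^ a / Gamma a * (x ^ (a - 1) * rexp (-((r - s) * x))) := by
        rw [integral_gammaMeasure ha hr]
        refine integral_congr_ae (ae_of_all _ fun x => ?_)
        simp only [smul_eq_mul, mul_assoc, ← exp_add]
        ring_nf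
    _ = (r / (r - s)) ^ a := by
        rw [integral_const_mul, integral_rpow_mul_exp_neg_mul_Ioi ha hrs, one_div,
          inv_rpow hrs.le, div_rpow hr.le hrs.le]
        have := (Gamma_pos_of_pos ha).ne'
        field_simp

lemma Iio_subset_integrableExpSet_id_gammaMeasure (ha : 0 < a) (hr : 0 < r) :
    Set.Iio r ⊆ integrableExpSet id (gammaMeasure a r) := by
  intro s hs
  have := isProbabilityMeasure_gammaMeasure ha hr
  rw [integrableExpSet, Set.mem_ofPred_eq, ← mgf_pos_iff, mgf_id_gammaMeasure ha hr hs]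
  exact rpow_pos_of_pos (div_pos hr (sub_pos.2 hs)) a

-- Both sides are analytic on `re z < r` and agree on the real axis.
lemma complexMGF_id_gammaMeasure (ha : 0 < a) (hr : 0 < r) {z : ℂ} (hz : z.re < r) :
    complexMGF id (gammaMeasure a r) z = (r / (r - z)) ^ (a : ℂ) := by
  let U : Set ℂ := {z | z.re < r}
  have hU : IsOpen U := isOpen_lt Complex.continuous_re continuous_const
  have hrU {w : ℂ} (hw : w ∈ U) : 0 < ((r - w)⁻¹).re := by
    have : 0 < (r - w).re := by simpa [U] using hw
    rw [Complex.inv_re]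
    exact div_pos this (Complex.normSq_pos.2 fun h => by simp [h] at this)
  have hcpow : AnalyticOnNhd ℂ (fun w => (r / (r - w) : ℂ) ^ (a : ℂ)) U := by
    refine DifferentiableOn.analyticOnNhd (fun w hw => ?_) hU
    refine (DifferentiableAt.cpow ?_ (differentiableAt_const _) (Or.inl ?_)).differentiableWithinAt
    · refine (differentiableAt_const _).div (by fun_prop) fun h => ?_
      simpa [h] using hrU hw
    · rw [div_eq_mul_inv, Complex.re_ofReal_mul]
      exact mul_pos hr (hrU hw)
  have hmgf : AnalyticOnNhd ℂ (complexMGF id (gammaMeasure a r)) U :=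
    analyticOnNhd_complexMGF.mono fun w hw => interior_maximal
      (Iio_subset_integrableExpSet_id_gammaMeasure ha hr) isOpen_Iio hw
  have hreal : ∀ᶠ t : ℝ in 𝓝[≠] 0,
      complexMGF id (gammaMeasure a r) t = (r / (r - t) : ℂ) ^ (a : ℂ) := by
    filter_upwards [nhdsWithin_le_nhds (Iio_mem_nhds hr)] with t ht
    rw [complexMGF_ofReal, mgf_id_gammaMeasure ha hr ht,
      Complex.ofReal_cpow (div_pos hr (sub_pos.2 ht)).le, Complex.ofReal_div, Complex.ofReal_sub]
  have htendsto : Tendsto ((↑) : ℝ → ℂ) (𝓝[≠] 0) (𝓝[≠] 0) :=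
    Complex.continuous_ofReal.continuousWithinAt.tendsto_nhdsWithin fun t ht => by simpa using ht
  exact hmgf.eqOn_of_preconnected_of_frequently_eq hcpow
    ((convex_Iio r).linear_preimage Complex.reLm).isPreconnected
    (show (0 : ℂ) ∈ U by simpa [U] using hr) (htendsto.frequently hreal.frequently) hz

lemma charFun_gammaMeasure (ha : 0 < a) (hr : 0 < r) (t : ℝ) :
    charFun (gammaMeasure a r) t = (r / (r - t * Complex.I) : ℂ) ^ (a : ℂ) := by
  rw [← complexMGF_id_mul_I, complexMGF_id_gammaMeasure ha hr (by simpa using hr)]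

lemma gammaMeasure_conv_gammaMeasure (ha : 0 < a) (hb : 0 < b) (hr : 0 < r) :
    gammaMeasure a r ∗ gammaMeasure b r = gammaMeasure (a + b) r := by
  have := isProbabilityMeasure_gammaMeasure ha hr
  have := isProbabilityMeasure_gammaMeasure hb hr
  have := isProbabilityMeasure_gammaMeasure (add_pos ha hb) hr
  refine Measure.ext_of_charFun (funext fun t => ?_)
  have hbase : (r / (r - t * Complex.I) : ℂ) ≠ 0 := by
    refine div_ne_zero (by exact_mod_cast hr.ne') fun h => hr.ne' ?_
    simpa using congrArg Complex.re h
  rw [charFun_conv, charFun_gammaMeasure ha hr, charFun_gammaMeasure hb hr,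
    charFun_gammaMeasure (add_pos ha hb) hr, Complex.ofReal_add, Complex.cpow_add _ _ hbase]

lemma integral_rpow_gammaMeasure (ha : 0 < a) (hr : 0 < r) (hs : 0 < a + s) :
    ∫ x, x ^ s ∂gammaMeasure a r = Gamma (a + s) / Gamma a * r ^ (-s) := by
  calc ∫ x, x ^ s ∂gammaMeasure a r
      = ∫ x in Set.Ioi 0, r ^ a / Gamma a * (x ^ (a + s - 1) * rexp (-(r * x))) := by
        rw [integral_gammaMeasure ha hr]
        refine setIntegral_congr_fun measurableSet_Ioi fun x (hx : 0 < x) => ?_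
        simp only [smul_eq_mul]
        rw [add_sub_right_comm, rpow_add hx]
        ring
    _ = Gamma (a + s) / Gamma a * r ^ (-s) := by
        rw [integral_const_mul, integral_rpow_mul_exp_neg_mul_Ioi hs hr, one_div,
          inv_rpow hr.le, rpow_add hr, rpow_neg hr.le]
        have := (rpow_pos_of_pos hr a).ne'
        field_simp

lemma integrable_rpow_gammaMeasure (ha : 0 < a) (hr : 0 < r) (hs : 0 < a + s) :
    Integrable (fun x => x ^ s) (gammaMeasure a r) := by
  refine not_imp_comm.1 integral_undef ?_
  rw [integral_rpow_gammaMeasure ha hr hs]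
  have := Gamma_pos_of_pos ha
  have := Gamma_pos_of_pos hs
  positivity

lemma integrable_id_gammaMeasure (ha : 0 < a) (hr : 0 < r) :
    Integrable (fun x => x) (gammaMeasure a r) := by
  simpa only [rpow_one] using integrable_rpow_gammaMeasure (s := 1) ha hr (by positivity)

lemma integral_id_gammaMeasure (ha : 0 < a) (hr : 0 < r) :
    ∫ x, x ∂gammaMeasure a r = a / r := by
  have h := integral_rpow_gammaMeasure (s := 1) ha hr (by positivity)
  have := (Gamma_pos_of_pos ha).ne'
  simp only [rpow_one, Gamma_add_one ha.ne', rpow_neg_one] at h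
  rw [h]
  field_simp

lemma exp_mul_log_ae_eq_rpow_gammaMeasure (a r s : ℝ) :
    (fun x => rexp (s * log x)) =ᵐ[gammaMeasure a r] fun x => x ^ s := by
  filter_upwards [ae_pos_gammaMeasure a r] with x hx
  rw [rpow_def_of_pos hx, mul_comm]

lemma mgf_log_gammaMeasure (ha : 0 < a) (hr : 0 < r) (hs : 0 < a + s) :
    mgf log (gammaMeasure a r) s = Gamma (a + s) / Gamma a * r ^ (-s) := by
  rw [mgf, integral_congr_ae (exp_mul_log_ae_eq_rpow_gammaMeasure a r s),
    integral_rpow_gammaMeasure ha hr hs]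

lemma zero_mem_interior_integrableExpSet_log_gammaMeasure (ha : 0 < a) (hr : 0 < r) :
    0 ∈ interior (integrableExpSet log (gammaMeasure a r)) := by
  refine mem_interior.2 ⟨Set.Ioi (-a), fun s (hs : -a < s) => ?_, isOpen_Ioi, by simpa using ha⟩
  exact (integrable_rpow_gammaMeasure ha hr (by linarith)).congr
    (exp_mul_log_ae_eq_rpow_gammaMeasure a r s).symm

lemma integrable_log_gammaMeasure (ha : 0 < a) (hr : 0 < r) :
    Integrable log (gammaMeasure a r) :=
  integrable_of_mem_interior_integrableExpSet
    (zero_mem_interior_integrableExpSet_log_gammaMeasure ha hr)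

lemma integral_log_gammaMeasure (ha : 0 < a) (hr : 0 < r) :
    ∫ x, log x ∂gammaMeasure a r = digamma a - log r := by
  have hΓ : HasDerivAt Gamma (deriv Gamma (a + 0)) (a + 0) := by
    rw [add_zero]
    refine (differentiableAt_Gamma fun m h => ?_).hasDerivAt
    linarith [(Nat.cast_nonneg m : (0 : ℝ) ≤ m)]
  have hderiv : HasDerivAt (fun s => Gamma (a + s) / Gamma a * r ^ (-s)) (digamma a - log r) 0 := by
    convert! ((hΓ.comp_const_add a 0).div_const (Gamma a)).mul
      ((hasDerivAt_neg (0 : ℝ)).const_rpow hr) using 1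
    simp [digamma, (Gamma_pos_of_pos ha).ne', sub_eq_add_neg]
  have hmgf : mgf log (gammaMeasure a r) =ᶠ[𝓝 0] fun s => Gamma (a + s) / Gamma a * r ^ (-s) := by
    filter_upwards [Ioi_mem_nhds (neg_lt_zero.2 ha)] with s hs
    exact mgf_log_gammaMeasure ha hr (neg_lt_iff_pos_add'.1 hs)
  rw [← deriv_mgf_zero (zero_mem_interior_integrableExpSet_log_gammaMeasure ha hr),
    hmgf.deriv_eq, hderiv.deriv]

end GammaDistribution

/-- The map `x ↦ e^{-z}`, with `z = (x - μ) / σ`, from the Gumbel scale to the standard exponential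
scale. It turns the coordinates of a GEV_r vector into the first `r` arrival times of a Poisson
process of unit rate. -/
noncomputable def arrivalTime (μ σ x : ℝ) : ℝ := rexp (-((x - μ) / σ))

section ArrivalTime

variable {μ σ : ℝ}

lemma arrivalTime_pos (μ σ x : ℝ) : 0 < arrivalTime μ σ x := exp_pos _

@[fun_prop]
lemma measurable_arrivalTime (μ σ : ℝ) : Measurable (arrivalTime μ σ) := by
  unfold arrivalTime
  fun_prop

lemma strictAnti_arrivalTime (μ : ℝ) (hσ : 0 < σ) : StrictAnti (arrivalTime μ σ) := by
  intro x y hxy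
  unfold arrivalTime
  gcongr

lemma Ioi_subset_range_arrivalTime (μ : ℝ) (hσ : σ ≠ 0) :
    Set.Ioi 0 ⊆ Set.range (arrivalTime μ σ) := by
  intro t ht
  refine ⟨μ - σ * log t, ?_⟩
  rw [arrivalTime, ← exp_log ht]
  congr 1
  field_simp
  simp

lemma hasDerivAt_arrivalTime (μ σ x : ℝ) :
    HasDerivAt (arrivalTime μ σ) (-(arrivalTime μ σ x / σ)) x := by
  unfold arrivalTime
  convert! (((hasDerivAt_id x).sub_const μ).div_const σ).neg.exp using 1
  simp [div_eq_mul_inv]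

-- The case `c = 0` gives the law of the first arrival time, the case `c = arrivalTime μ σ b` that
-- of the waiting time after an arrival at `c`.
lemma lintegral_arrivalTime_sub (μ : ℝ) (hσ : 0 < σ) {c : ℝ} (hc : 0 ≤ c) (f : ℝ → ENNReal) :
    ∫⁻ x in {x | c < arrivalTime μ σ x}, ENNReal.ofReal
        (arrivalTime μ σ x / σ * rexp (-(arrivalTime μ σ x - c))) * f (arrivalTime μ σ x - c)
      = ∫⁻ t, f t ∂expMeasure 1 := by
  have himage : (fun x => arrivalTime μ σ x - c) '' {x | c < arrivalTime μ σ x} = Set.Ioi 0 := by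
    ext t
    refine ⟨?_, fun ht => ?_⟩
    · rintro ⟨x, hx : c < arrivalTime μ σ x, rfl⟩
      exact sub_pos.2 hx
    · obtain ⟨x, hx⟩ := Ioi_subset_range_arrivalTime μ hσ.ne' (add_pos_of_pos_of_nonneg ht hc)
      exact ⟨x, by simpa [hx] using ht, by simp [hx]⟩
  rw [lintegral_expMeasure_one, ← himage, lintegral_image_eq_lintegral_abs_deriv_mul
    (measurableSet_lt measurable_const (measurable_arrivalTime μ σ))
    (fun x _ => ((hasDerivAt_arrivalTime μ σ x).sub_const c).hasDerivWithinAt)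
    fun x _ y _ hxy => (strictAnti_arrivalTime μ hσ).injective (sub_left_injective hxy)]
  refine lintegral_congr fun x => ?_
  have hx : 0 ≤ arrivalTime μ σ x / σ := div_nonneg (arrivalTime_pos μ σ x).le hσ.le
  rw [ENNReal.ofReal_mul hx, abs_neg, abs_of_nonneg hx, mul_assoc]

end ArrivalTime

section Tuples

lemma measurableSet_strictAnti {ι α : Type*} [Countable ι] [Preorder ι] [LinearOrder α]
    [TopologicalSpace α] [OrderClosedTopology α] [SecondCountableTopology α] [MeasurableSpace α]
    [OpensMeasurableSpace α] : MeasurableSet {x : ι → α | StrictAnti x} := by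
  simp only [StrictAnti, Set.ofPred_forall]
  exact .iInter fun i => .iInter fun j => .iInter fun _ =>
    measurableSet_lt (measurable_pi_apply j) (measurable_pi_apply i)

lemma strictAnti_fin_snoc {α : Type*} [Preorder α] {n : ℕ} {y : Fin (n + 1) → α} {a : α} :
    StrictAnti (Fin.snoc y a : Fin (n + 2) → α) ↔ StrictAnti y ∧ a < y (Fin.last n) := by
  simp only [Fin.strictAnti_iff_succ_lt, Fin.forall_fin_succ', Fin.succ_castSucc, Fin.succ_last,
    Fin.snoc_castSucc, Fin.snoc_last]

lemma lintegral_fin_snoc {α : Type*} [MeasureSpace α] [SigmaFinite (volume : Measure α)] {n : ℕ}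
    {f : (Fin (n + 1) → α) → ENNReal} (hf : Measurable f) :
    ∫⁻ x, f x = ∫⁻ y : Fin n → α, ∫⁻ a : α, f (Fin.snoc y a) := by
  have h := (volume_preserving_piFinSuccAbove (fun _ : Fin (n + 1) => α) (Fin.last n)).symm
  rw [← h.lintegral_comp hf, Measure.volume_eq_prod, lintegral_prod_symm]
  swap
  · exact (hf.comp (MeasurableEquiv.measurable _)).aemeasurable
  refine lintegral_congr fun y => lintegral_congr fun a => congrArg f ?_
  exact Fin.insertNth_last' a y

end Tuples

section GEVr

variable {μ σ : ℝ} {n : ℕ}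

lemma gevr0Density_succ (μ σ : ℝ) (x : Fin (n + 1) → ℝ) :
    gevr0Density μ σ (n + 1) x = {x : Fin (n + 1) → ℝ | StrictAnti x}.indicator
      (fun x => (∏ j, arrivalTime μ σ (x j) / σ) * rexp (-arrivalTime μ σ (x (Fin.last n)))) x := by
  by_cases hx : StrictAnti x
  · rw [gevr0Density, dif_pos ⟨n.succ_pos, hx⟩, Set.indicator_of_mem (by exact hx),
      Finset.prod_div_distrib, Finset.prod_const, Finset.card_univ, Fintype.card_fin,
      sub_eq_add_neg, exp_add, ← Finset.sum_neg_distrib, exp_sum]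
    simp only [arrivalTime, Nat.add_sub_cancel, Fin.last]
    ring
  · rw [gevr0Density, dif_neg fun h => hx h.2, Set.indicator_of_notMem (by exact hx)]

@[fun_prop]
lemma measurable_gevr0Density_succ (μ σ : ℝ) (n : ℕ) :
    Measurable (gevr0Density μ σ (n + 1)) := by
  simp only [funext (gevr0Density_succ μ σ)]
  exact Measurable.indicator (by fun_prop) measurableSet_strictAnti

lemma gevr0Density_nonneg (hσ : 0 ≤ σ) (x : Fin (n + 1) → ℝ) :
    0 ≤ gevr0Density μ σ (n + 1) x := by
  rw [gevr0Density_succ]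
  refine Set.indicator_nonneg (fun x _ => mul_nonneg (Finset.prod_nonneg fun j _ => ?_) ?_) x
  · exact div_nonneg (arrivalTime_pos μ σ _).le hσ
  · exact (exp_pos _).le

lemma gevr0Density_snoc (μ σ : ℝ) (y : Fin (n + 1) → ℝ) (a : ℝ) :
    gevr0Density μ σ (n + 2) (Fin.snoc y a) = gevr0Density μ σ (n + 1) y *
      (Set.Iio (y (Fin.last n))).indicator (fun a => arrivalTime μ σ a / σ *
        rexp (-(arrivalTime μ σ a - arrivalTime μ σ (y (Fin.last n))))) a := by
  simp only [gevr0Density_succ, Set.indicator, Set.mem_ofPred_eq, strictAnti_fin_snoc, Set.mem_Iio]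
  by_cases hy : StrictAnti y <;> by_cases ha : a < y (Fin.last n)
  · simp only [hy, ha, and_self, if_true, Fin.prod_univ_castSucc (n := n + 1), Fin.snoc_castSucc,
      Fin.snoc_last, neg_sub, exp_sub, exp_neg]
    field_simp
  all_goals simp [hy, ha]

lemma lintegral_gevr0Measure_succ (μ σ : ℝ) (f : (Fin (n + 1) → ℝ) → ENNReal) :
    ∫⁻ x, f x ∂gevr0Measure μ σ (n + 1)
      = ∫⁻ x, ENNReal.ofReal (gevr0Density μ σ (n + 1) x) * f x :=
  lintegral_withDensity_eq_lintegral_mul_non_measurable _ (by fun_prop)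
    (ae_of_all _ fun _ => ENNReal.ofReal_lt_top) _

lemma lintegral_gevr0Measure_snoc (μ : ℝ) (hσ : 0 ≤ σ) {f : (Fin (n + 2) → ℝ) → ENNReal}
    (hf : Measurable f) :
    ∫⁻ x, f x ∂gevr0Measure μ σ (n + 2) =
      ∫⁻ y, (∫⁻ a in Set.Iio (y (Fin.last n)), ENNReal.ofReal (arrivalTime μ σ a / σ *
          rexp (-(arrivalTime μ σ a - arrivalTime μ σ (y (Fin.last n))))) * f (Fin.snoc y a))
        ∂gevr0Measure μ σ (n + 1) := by
  rw [lintegral_gevr0Measure_succ, lintegral_fin_snoc (by fun_prop), lintegral_gevr0Measure_succ]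
  refine lintegral_congr fun y => ?_
  rw [← lintegral_const_mul' _ _ ENNReal.ofReal_ne_top, ← lintegral_indicator measurableSet_Iio]
  refine lintegral_congr fun a => ?_
  rw [gevr0Density_snoc, ENNReal.ofReal_mul (gevr0Density_nonneg hσ y), mul_assoc]
  by_cases ha : a ∈ Set.Iio (y (Fin.last n)) <;> simp [ha]

lemma measurePreserving_arrivalTime_fin_one (μ : ℝ) (hσ : 0 < σ) :
    MeasurePreserving (fun x : Fin 1 → ℝ => arrivalTime μ σ (x 0))
      (gevr0Measure μ σ 1) (expMeasure 1) := by
  refine ⟨by fun_prop, Measure.ext_of_lintegral _ fun f hf => ?_⟩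
  rw [lintegral_map hf (by fun_prop), lintegral_gevr0Measure_succ,
    ← lintegral_arrivalTime_sub μ hσ le_rfl]
  refine ((volume_preserving_funUnique (Fin 1) ℝ).symm.lintegral_comp_emb
    (MeasurableEquiv.measurableEmbedding _) _).symm.trans ?_
  simp [gevr0Density_succ, arrivalTime_pos, Subsingleton.strictAnti]

lemma measurePreserving_init_prodMk_arrivalTime_sub (μ : ℝ) (hσ : 0 < σ) (n : ℕ) :
    MeasurePreserving (fun x : Fin (n + 2) → ℝ => (Fin.init x,
        arrivalTime μ σ (x (Fin.last (n + 1))) - arrivalTime μ σ (x (Fin.last n).castSucc)))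
      (gevr0Measure μ σ (n + 2)) ((gevr0Measure μ σ (n + 1)).prod (expMeasure 1)) := by
  have := isProbabilityMeasure_expMeasure one_pos
  have hIio (b : ℝ) : Set.Iio b = {a | arrivalTime μ σ b < arrivalTime μ σ a} :=
    Set.ext fun a => (strictAnti_arrivalTime μ hσ).lt_iff_gt.symm
  refine ⟨by fun_prop, Measure.ext_of_lintegral _ fun f hf => ?_⟩
  rw [lintegral_map hf (by fun_prop), lintegral_gevr0Measure_snoc μ hσ.le (by fun_prop),
    lintegral_prod _ hf.aemeasurable]
  refine lintegral_congr fun y => ?_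
  rw [← lintegral_arrivalTime_sub μ hσ (arrivalTime_pos μ σ (y (Fin.last n))).le, hIio]
  simp only [Fin.init_snoc, Fin.snoc_last, Fin.snoc_castSucc]

lemma measurePreserving_arrivalTime_last (μ : ℝ) (hσ : 0 < σ) (n : ℕ) :
    MeasurePreserving (fun x : Fin (n + 1) → ℝ => arrivalTime μ σ (x (Fin.last n)))
      (gevr0Measure μ σ (n + 1)) (gammaMeasure (n + 1) 1) := by
  induction n with
  | zero => simpa [expMeasure] using measurePreserving_arrivalTime_fin_one μ hσ
  | succ n ih =>
    have := isProbabilityMeasure_expMeasure one_pos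
    have := isProbabilityMeasure_gammaMeasure n.cast_add_one_pos one_pos
    have := ih.hasLaw.isProbabilityMeasure
    have hadd : MeasurePreserving (fun p : ℝ × ℝ => p.1 + p.2)
        ((gammaMeasure (n + 1) 1).prod (expMeasure 1)) (gammaMeasure (n + 1 + 1) 1) :=
      ⟨by fun_prop, gammaMeasure_conv_gammaMeasure n.cast_add_one_pos one_pos one_pos⟩
    have hlast := (hadd.comp (ih.prod (.id (expMeasure 1)))).comp
      (measurePreserving_init_prodMk_arrivalTime_sub μ hσ n)
    convert hlast using 1
    · ext x
      simp [Fin.init]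
    · simp

lemma isProbabilityMeasure_gevr0Measure_succ (μ : ℝ) (hσ : 0 < σ) (n : ℕ) :
    IsProbabilityMeasure (gevr0Measure μ σ (n + 1)) := by
  have := isProbabilityMeasure_gammaMeasure n.cast_add_one_pos one_pos
  exact (measurePreserving_arrivalTime_last μ hσ n).hasLaw.isProbabilityMeasure

lemma measurePreserving_arrivalTime_sub (μ : ℝ) (hσ : 0 < σ) (n : ℕ) :
    MeasurePreserving (fun x : Fin (n + 2) → ℝ =>
        arrivalTime μ σ (x (Fin.last (n + 1))) - arrivalTime μ σ (x (Fin.last n).castSucc))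
      (gevr0Measure μ σ (n + 2)) (expMeasure 1) := by
  have := isProbabilityMeasure_expMeasure one_pos
  have := isProbabilityMeasure_gevr0Measure_succ μ hσ n
  exact measurePreserving_snd.comp (measurePreserving_init_prodMk_arrivalTime_sub μ hσ n)

lemma integrable_arrivalTime_sub (μ : ℝ) (hσ : 0 < σ) (n : ℕ) :
    Integrable (fun x : Fin (n + 2) → ℝ =>
        arrivalTime μ σ (x (Fin.last (n + 1))) - arrivalTime μ σ (x (Fin.last n).castSucc))
      (gevr0Measure μ σ (n + 2)) :=
  (measurePreserving_arrivalTime_sub μ hσ n).integrable_comp_of_integrable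
    (g := fun t => t) (integrable_id_gammaMeasure one_pos one_pos)

lemma integral_arrivalTime_sub (μ : ℝ) (hσ : 0 < σ) (n : ℕ) :
    ∫ x : Fin (n + 2) → ℝ,
        (arrivalTime μ σ (x (Fin.last (n + 1))) - arrivalTime μ σ (x (Fin.last n).castSucc))
      ∂gevr0Measure μ σ (n + 2) = 1 := by
  rw [(measurePreserving_arrivalTime_sub μ hσ n).hasLaw.integral_eq, expMeasure,
    integral_id_gammaMeasure one_pos one_pos, div_one]

lemma integrable_log_arrivalTime_last (μ : ℝ) (hσ : 0 < σ) (n : ℕ) :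
    Integrable (fun x : Fin (n + 1) → ℝ => log (arrivalTime μ σ (x (Fin.last n))))
      (gevr0Measure μ σ (n + 1)) :=
  (measurePreserving_arrivalTime_last μ hσ n).integrable_comp_of_integrable
    (g := log) (integrable_log_gammaMeasure n.cast_add_one_pos one_pos)

lemma integral_log_arrivalTime_last (μ : ℝ) (hσ : 0 < σ) (n : ℕ) :
    ∫ x, log (arrivalTime μ σ (x (Fin.last n))) ∂gevr0Measure μ σ (n + 1) = digamma (n + 1) := by
  have h := (measurePreserving_arrivalTime_last μ hσ n).hasLaw.integral_comp
    measurable_log.aestronglyMeasurable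
  rwa [integral_log_gammaMeasure n.cast_add_one_pos one_pos, log_one, sub_zero] at h

end GEVr

/-- the mean of the entropy difference
`Y = −log σ − e^{−Z_r} + e^{−Z_{r−1}} − Z_r` under the Gumbel-case GEV_r
distribution is `−log σ − 1 + ψ(r)`. -/
theorem entropy_difference_mean_gumbel
    (μ σ : ℝ) (hσ : 0 < σ) (r : ℕ) (hr : 2 ≤ r) :
    ∫ x : Fin r → ℝ,
        (-Real.log σ
          - Real.exp (-((x ⟨r - 1, by omega⟩ - μ) / σ))
          + Real.exp (-((x ⟨r - 2, by omega⟩ - μ) / σ))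
          - (x ⟨r - 1, by omega⟩ - μ) / σ)
        ∂(gevr0Measure μ σ r)
      = -Real.log σ - 1 + digamma r := by
  obtain ⟨n, rfl⟩ := Nat.exists_eq_add_of_le' hr
  have := isProbabilityMeasure_gevr0Measure_succ μ hσ (n + 1)
  let gap (x : Fin (n + 2) → ℝ) : ℝ :=
    arrivalTime μ σ (x (Fin.last (n + 1))) - arrivalTime μ σ (x (Fin.last n).castSucc)
  have hgap : Integrable gap (gevr0Measure μ σ (n + 2)) := integrable_arrivalTime_sub μ hσ n
  calc _ = ∫ x, (-log σ - gap x + log (arrivalTime μ σ (x (Fin.last (n + 1)))))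
          ∂gevr0Measure μ σ (n + 2) := by
        refine integral_congr_ae (ae_of_all _ fun x => ?_)
        simp only [gap, arrivalTime, log_exp, Fin.last, Fin.castSucc_mk, Nat.add_sub_cancel,
          Nat.add_succ_sub_one]
        ring
    _ = -log σ - 1 + digamma ↑(n + 2) := by
        rw [integral_add (f := fun x => -log σ - gap x) ((integrable_const _).sub hgap)
            (integrable_log_arrivalTime_last μ hσ (n + 1)),
          integral_sub (integrable_const _) hgap, integral_const, probReal_univ, one_smul,
          integral_arrivalTime_sub μ hσ, integral_log_arrivalTime_last μ hσ]
        push_cast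
        ring_nf
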